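/- Let f be 2π-periodic and, for a fixed x, let θ > 0 be such that f(x - θ·) is analytic on [-π, π], and let ρ be a C_0^∞(-π,π) localizer in the Gevrey class G_α with parameters (M, η) and with ρ(0) = 1. Then the function g_x(y) := f(x-θy)ρ(y) - f(x) belongs to G_α, and the regularization error of the spectral mollifier satisfies |(f ⋆ ψ_{p,θ})(x) - f(x)| = |(S_p g_x)(0) - g_x(0)| ≤ Const_ρ · p · e^{-α(ηp)^{1/α}}; in particular, for the localizer ρ_c one has |(f ⋆ ψ_{p,θ_c})(x) - f(x)| ≤ Const_c · p · e^{-2√(η_c p)}. -/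

import Mathlib

open MeasureTheory Real

noncomputable section

/-- Dirichlet kernel of degree `p`: `D_p(x) = (1/2π) ∑_{|k| ≤ p} e^{ikx}`. -/
def dirichletKer (p : ℕ) (x : ℝ) : ℝ :=
  (1 / (2 * π)) * ∑ k ∈ Finset.Icc (-(p : ℤ)) (p : ℤ), Real.cos (k * x)

/-- Fourier coefficient `f̂_k` of a 2π-periodic function. -/
def fourierCoefOn (f : ℝ → ℂ) (k : ℤ) : ℂ :=
  (1 / (2 * π)) * ∫ y in (-π)..π, f y * Complex.exp (-(Complex.I * k * y))

/-- `N`-th Fourier partial sum `S_N f`. -/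
def SN (N : ℕ) (f : ℝ → ℂ) (x : ℝ) : ℂ :=
  ∑ k ∈ Finset.Icc (-(N : ℤ)) (N : ℤ), fourierCoefOn f k * Complex.exp (Complex.I * k * x)

/-- The two-parameter spectral mollifier `ψ_{p,θ}(x) = (1/θ) ρ(x/θ) D_p(x/θ)`. -/
def specMollifier (ρ : ℝ → ℝ) (p : ℕ) (θ : ℝ) (x : ℝ) : ℝ :=
  (1 / θ) * ρ (x / θ) * dirichletKer p (x / θ)

/-- `‖g‖_{C^s}`: the sup norm of the `s`-th derivative of `g`. -/
def CsNorm (s : ℕ) (g : ℝ → ℝ) : ℝ := ⨆ x : ℝ, |iteratedDeriv s g x|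


lemma analytic_local (F : ℝ → ℂ) (a : ℝ) (h : AnalyticAt ℝ F a) :
    ∃ C R : ℝ, 0 < C ∧ 0 < R ∧ ∀ᶠ y in nhds a, ∀ j : ℕ,
      ‖iteratedDeriv j F y‖ ≤ C * (Nat.factorial j : ℝ) * R ^ j := by
  obtain ⟨p, r0, hp⟩ := h
  obtain ⟨r, hr0, hr⟩ : ∃ r : NNReal, 0 < r ∧ ((r : ENNReal) + r) < r0 := by
    obtain ⟨q, hq0, hq⟩ := ENNReal.lt_iff_exists_nnreal_btwn.1 hp.r_pos
    refine ⟨q / 2, half_pos (by exact_mod_cast hq0), ?_⟩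
    rw [← ENNReal.coe_add, add_halves]; exact hq
  have hrad : ((r : ENNReal) + r) < p.radius := hr.trans_le hp.r_le
  have hsum := p.changeOriginSeries_summable_aux₁ hrad
  set T : NNReal := ∑' s : Σ k l : ℕ, { s : Finset (Fin (k + l)) // s.card = l },
      ‖p (s.1 + s.2.1)‖₊ * r ^ s.2.1 * r ^ s.1 with hT
  have key : ∀ y : ℝ, ‖y‖₊ ≤ r → ∀ k : ℕ, ‖p.changeOrigin y k‖₊ * r ^ k ≤ T := by
    intro y hy k
    have hy' : (‖y‖₊ : ENNReal) < p.radius :=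
      lt_of_le_of_lt (by exact_mod_cast hy) (lt_of_le_of_lt (le_add_right le_rfl) hrad)
    have hr' : (r : ENNReal) < p.radius := lt_of_le_of_lt (le_add_right le_rfl) hrad
    have h1 := p.nnnorm_changeOrigin_le k hy'
    have h2 : (∑' s : Σ l : ℕ, { s : Finset (Fin (k + l)) // s.card = l },
        ‖p (k + s.1)‖₊ * ‖y‖₊ ^ s.1) ≤ ∑' s : Σ l : ℕ, { s : Finset (Fin (k + l)) // s.card = l },
        ‖p (k + s.1)‖₊ * r ^ s.1 := by
      apply Summable.tsum_le_tsum
      · intro s; gcongr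
      · exact p.changeOriginSeries_summable_aux₂ hy' k
      · exact p.changeOriginSeries_summable_aux₂ hr' k
    have hs := NNReal.summable_sigma.1 hsum
    have h3 : (∑' s : Σ l : ℕ, { s : Finset (Fin (k + l)) // s.card = l },
        ‖p (k + s.1)‖₊ * r ^ s.1) * r ^ k ≤ T := by
      rw [← NNReal.tsum_mul_right, hT, Summable.tsum_sigma' hs.1 hsum]
      exact hs.2.le_tsum k (fun _ _ => zero_le)
    calc _ ≤ _ := by gcongr; exact h1.trans h2
      _ ≤ _ := h3
  refine ⟨T + 1, (r : ℝ)⁻¹, by positivity, by positivity, ?_⟩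
  filter_upwards [Metric.closedBall_mem_nhds a (ε := (r : ℝ)) (by exact_mod_cast hr0)] with z hz j
  set y := z - a with hyd
  have hy : ‖y‖₊ ≤ r := by
    rw [mem_closedBall_iff_norm] at hz
    exact_mod_cast hz
  have hb := hp.changeOrigin (y := y)
    (lt_of_le_of_lt (by exact_mod_cast hy) (lt_of_le_of_lt (le_add_right le_rfl) hr))
  have e : a + y = z := by rw [hyd]; ring
  rw [e] at hb
  have hf := hb.factorial_smul 1 j
  rw [iteratedDeriv_eq_iteratedFDeriv, ← hf, nsmul_eq_mul, norm_mul]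
  have h4 : ‖p.changeOrigin y j (fun _ => 1)‖ ≤ ‖p.changeOrigin y j‖ := by
    simpa using (p.changeOrigin y j).le_opNorm (fun _ => 1)
  have h5 : ‖p.changeOrigin y j‖ * (r : ℝ) ^ j ≤ T := by exact_mod_cast key y hy j
  have hrp : (0 : ℝ) < (r : ℝ) ^ j := by positivity
  have h6 : ‖p.changeOrigin y j‖ ≤ (T + 1) * (r : ℝ)⁻¹ ^ j := by
    rw [inv_pow, ← div_eq_mul_inv, le_div_iff₀ hrp]; linarith
  have h7 : ‖((Nat.factorial j : ℕ) : ℂ)‖ = (Nat.factorial j : ℝ) := by simp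
  rw [h7]
  calc _ ≤ (Nat.factorial j : ℝ) * ((T + 1) * (r : ℝ)⁻¹ ^ j) := by
        gcongr; exact h4.trans h6
    _ = _ := by ring

lemma analytic_bound (F : ℝ → ℂ) (K : Set ℝ) (hK : IsCompact K) (h : AnalyticOnNhd ℝ F K) :
    ∃ C R : ℝ, 0 < C ∧ 0 < R ∧ ∀ y ∈ K, ∀ j : ℕ,
      ‖iteratedDeriv j F y‖ ≤ C * (Nat.factorial j : ℝ) * R ^ j := by
  refine hK.induction_on (p := fun s => ∃ C R : ℝ, 0 < C ∧ 0 < R ∧ ∀ y ∈ s, ∀ j : ℕ,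
      ‖iteratedDeriv j F y‖ ≤ C * (Nat.factorial j : ℝ) * R ^ j) ?_ ?_ ?_ ?_
  · exact ⟨1, 1, one_pos, one_pos, by simp⟩
  · rintro s t hst ⟨C, R, hC, hR, hb⟩
    exact ⟨C, R, hC, hR, fun y hy => hb y (hst hy)⟩
  · rintro s t ⟨C, R, hC, hR, hb⟩ ⟨C', R', hC', hR', hb'⟩
    refine ⟨max C C', max R R', lt_max_of_lt_left hC, lt_max_of_lt_left hR, ?_⟩
    rintro y (hy | hy) j
    · refine (hb y hy j).trans ?_
      gcongr
      · exact le_max_left _ _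
      · exact le_max_left _ _
    · refine (hb' y hy j).trans ?_
      gcongr
      · exact le_max_right _ _
      · exact le_max_right _ _
  · intro y hy
    obtain ⟨C, R, hC, hR, hb⟩ := analytic_local F y (h y hy)
    exact ⟨_, mem_nhdsWithin_of_mem_nhds hb, C, R, hC, hR, fun z hz => hz⟩


lemma gevrey_one_step (ρ : ℝ → ℝ) (M η : ℝ) (hM : 0 < M) (hη : 0 < η)
    (hρsm : ContDiff ℝ (⊤ : ℕ∞) ρ)
    (hgev : ∀ s : ℕ, 1 ≤ s → ∀ y : ℝ,
      |iteratedDeriv s ρ y| ≤ M * (Nat.factorial s : ℝ) / η ^ s) (a : ℝ)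
    (ha : ∀ y < a, ρ y = 0) : ∀ y < a + η / 4, ρ y = 0 := by
  intro y hy
  by_cases hya : y < a
  · exact ha y hya
  push Not at hya
  set b := a - η / 4 with hb
  have hby : b < y := by linarith
  have hzero : ∀ k : ℕ, iteratedDeriv k ρ b = 0 := by
    intro k
    have : ρ =ᶠ[nhds b] fun _ => (0 : ℝ) := by
      filter_upwards [Iio_mem_nhds (show b < a by linarith)] with z hz using ha z hz
    rw [this.iteratedDeriv_eq]
    simp [iteratedDeriv_const]
  have hcd : ∀ n : ℕ, ContDiff ℝ n ρ := fun n => hρsm.of_le (by exact_mod_cast le_top)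
  have heq : ∀ k : ℕ, ∀ z ∈ Set.Icc b y,
      iteratedDerivWithin k ρ (Set.Icc b y) z = iteratedDeriv k ρ z := fun k z hz =>
    iteratedDerivWithin_eq_iteratedDeriv (uniqueDiffOn_Icc hby) (hcd k).contDiffAt hz
  have htay : ∀ n : ℕ, taylorWithinEval ρ n (Set.Icc b y) b y = 0 := by
    intro n
    rw [taylor_within_apply]
    apply Finset.sum_eq_zero
    intro k _
    rw [heq k b ⟨le_rfl, hby.le⟩, hzero]; simp
  have hbound : ∀ n : ℕ, |ρ y| ≤ M * (((n + 1 : ℕ) : ℝ) * (1 / 2) ^ (n + 1)) := by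
    intro n
    have h := taylor_mean_remainder_bound (f := ρ) (a := b) (b := y) (x := y) (n := n)
      (C := M * (Nat.factorial (n + 1) : ℝ) / η ^ (n + 1)) hby.le
      (by exact_mod_cast (hcd (n + 1)).contDiffOn) ⟨hby.le, le_rfl⟩
      (by
        intro z hz
        rw [heq (n + 1) z hz]
        exact hgev (n + 1) (by omega) z)
    rw [htay, sub_zero, Real.norm_eq_abs] at h
    refine h.trans ?_
    have h1 : (y - b) ^ (n + 1) ≤ (η * (1 / 2)) ^ (n + 1) := by
      apply pow_le_pow_left₀ (by linarith); linarith
    calc M * (Nat.factorial (n + 1) : ℝ) / η ^ (n + 1) * (y - b) ^ (n + 1) / (Nat.factorial n : ℝ)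
        ≤ M * (Nat.factorial (n + 1) : ℝ) / η ^ (n + 1) * (η * (1 / 2)) ^ (n + 1)
          / (Nat.factorial n : ℝ) := by gcongr
      _ = _ := by
        rw [Nat.factorial_succ, mul_pow]
        have : (Nat.factorial n : ℝ) ≠ 0 := by positivity
        push_cast
        field_simp
  have hlim : Filter.Tendsto (fun n : ℕ => M * (((n + 1 : ℕ) : ℝ) * (1 / 2) ^ (n + 1)))
      Filter.atTop (nhds 0) := by
    have h := tendsto_self_mul_const_pow_of_lt_one (r := (1 / 2 : ℝ)) (by norm_num) (by norm_num)
    have h2 := ((Filter.tendsto_add_atTop_iff_nat 1).2 h).const_mul M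
    simpa using h2
  have : |ρ y| ≤ 0 := ge_of_tendsto' hlim hbound
  exact abs_nonpos_iff.1 this

lemma gevrey_one_zero (ρ : ℝ → ℝ) (M η : ℝ) (hM : 0 < M) (hη : 0 < η)
    (hρsm : ContDiff ℝ (⊤ : ℕ∞) ρ)
    (hgev : ∀ s : ℕ, 1 ≤ s → ∀ y : ℝ,
      |iteratedDeriv s ρ y| ≤ M * (Nat.factorial s : ℝ) / η ^ s) (a : ℝ)
    (ha : ∀ y < a, ρ y = 0) (y : ℝ) : ρ y = 0 := by
  have h : ∀ n : ℕ, ∀ y < a + n * (η / 4), ρ y = 0 := by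
    intro n
    induction n with
    | zero => simpa using ha
    | succ n ih =>
      have := gevrey_one_step ρ M η hM hη hρsm hgev _ ih
      intro z hz
      apply this
      push_cast at hz
      linarith
  obtain ⟨n, hn⟩ := exists_nat_gt ((y - a) / (η / 4))
  rw [div_lt_iff₀ (by positivity)] at hn
  exact h n y (by linarith)

/-- Leibniz weights are summable. -/
lemma summable_weights (β q : ℝ) (hβ : 0 < β) (hq : 0 < q) :
    Summable (fun j : ℕ => q ^ j / (Nat.factorial j : ℝ) ^ β) := by
  apply summable_of_ratio_test_tendsto_lt_one (l := 0) one_pos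
  · filter_upwards with n
    have : 0 < (Nat.factorial n : ℝ) := by positivity
    positivity
  · have h : Filter.Tendsto (fun n : ℕ => q * ((((n + 1 : ℕ) : ℝ)) ^ β)⁻¹) Filter.atTop (nhds 0) := by
      have h1 := ((tendsto_rpow_atTop hβ).comp tendsto_natCast_atTop_atTop).inv_tendsto_atTop
      have h2 := ((Filter.tendsto_add_atTop_iff_nat 1).2 h1).const_mul q
      simpa using h2
    refine h.congr ?_
    intro n
    have hn : 0 < (Nat.factorial n : ℝ) := by positivity
    have hn1 : (0:ℝ) < ((n + 1 : ℕ) : ℝ) := by positivity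
    rw [Nat.factorial_succ]
    have h3 : (((n + 1) * Nat.factorial n : ℕ) : ℝ) ^ β
        = ((n + 1 : ℕ) : ℝ) ^ β * (Nat.factorial n : ℝ) ^ β := by
      rw [Nat.cast_mul, Real.mul_rpow hn1.le hn.le]
    rw [h3, Real.norm_of_nonneg (by positivity), Real.norm_of_nonneg (by positivity)]
    have h4 : 0 < (Nat.factorial n : ℝ) ^ β := by positivity
    have h5 : 0 < ((n + 1 : ℕ) : ℝ) ^ β := by positivity
    field_simp
    ring

lemma norm_iteratedDeriv_ofReal (ρ : ℝ → ℝ) (hρsm : ContDiff ℝ (⊤ : ℕ∞) ρ) (k : ℕ) (y : ℝ) :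
    ‖iteratedDeriv k (fun z => ((ρ z : ℝ) : ℂ)) y‖ = |iteratedDeriv k ρ y| := by
  have h := Complex.ofRealLI.norm_iteratedFDeriv_comp_left (f := ρ) (x := y) (n := k) (i := k)
    ((hρsm.of_le (by exact_mod_cast le_top)).contDiffAt) le_rfl
  rw [norm_iteratedFDeriv_eq_norm_iteratedDeriv, norm_iteratedFDeriv_eq_norm_iteratedDeriv] at h
  rw [← Real.norm_eq_abs, ← h]
  rfl

lemma prod_contDiff (F : ℝ → ℂ) (ρ : ℝ → ℝ)
    (hana : AnalyticOnNhd ℝ F (Set.Icc (-π) π))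
    (hρsm : ContDiff ℝ (⊤ : ℕ∞) ρ)
    (hsupp : ∀ y, y ∉ Set.Ioo (-π) π → ρ y = 0) :
    ContDiff ℝ (⊤ : ℕ∞) (fun z => F z * ((ρ z : ℝ) : ℂ)) := by
  rw [contDiff_iff_contDiffAt]
  intro y
  by_cases hy : y ∈ Set.Icc (-π) π
  · exact ((hana y hy).contDiffAt).mul
      (Complex.ofRealCLM.contDiff.comp hρsm).contDiffAt
  · have : (fun z => F z * ((ρ z : ℝ) : ℂ)) =ᶠ[nhds y] fun _ => 0 := by
      filter_upwards [isClosed_Icc.isOpen_compl.mem_nhds hy] with z hz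
      rw [hsupp z (fun h => hz (Set.Ioo_subset_Icc_self h))]; simp
    exact contDiffAt_const.congr_of_eventuallyEq this

lemma prod_zero (F : ℝ → ℂ) (ρ : ℝ → ℝ)
    (hsupp : ∀ y, y ∉ Set.Ioo (-π) π → ρ y = 0) (s : ℕ) (y : ℝ) (hy : y ∉ Set.Icc (-π) π) :
    iteratedDeriv s (fun z => F z * ((ρ z : ℝ) : ℂ)) y = 0 := by
  have : (fun z => F z * ((ρ z : ℝ) : ℂ)) =ᶠ[nhds y] fun _ => 0 := by
    filter_upwards [isClosed_Icc.isOpen_compl.mem_nhds hy] with z hz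
    rw [hsupp z (fun h => hz (Set.Ioo_subset_Icc_self h))]; simp
  rw [this.iteratedDeriv_eq]
  simp

lemma term_bound (α η C R M1 : ℝ) (hα : 1 < α) (hη : 0 < η) (hC : 0 < C) (hR : 0 < R)
    (hM1 : 0 < M1) (s j : ℕ) (hj : j ≤ s) :
    (s.choose j : ℝ) * (C * (Nat.factorial j : ℝ) * R ^ j) *
      (M1 * (Nat.factorial (s - j) : ℝ) ^ α / η ^ (s - j)) ≤
    C * M1 * ((Nat.factorial s : ℝ) ^ α / η ^ s) *
      ((η * R) ^ j / (Nat.factorial j : ℝ) ^ (α - 1)) := by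
  obtain ⟨m, rfl⟩ := Nat.exists_eq_add_of_le hj
  rw [Nat.add_sub_cancel_left]
  have hjf : 0 < (Nat.factorial j : ℝ) := by positivity
  have hmf : 0 < (Nat.factorial m : ℝ) := by positivity
  have hsf : 0 < (Nat.factorial (j + m) : ℝ) := by positivity
  have h1 : ((j + m).choose j : ℝ) * (Nat.factorial j : ℝ) * (Nat.factorial m : ℝ)
      = (Nat.factorial (j + m) : ℝ) := by
    have := Nat.choose_mul_factorial_mul_factorial hj
    rw [Nat.add_sub_cancel_left] at this
    exact_mod_cast this
  have h2 : (Nat.factorial j : ℝ) * (Nat.factorial m : ℝ) ≤ (Nat.factorial (j + m) : ℝ) := by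
    exact_mod_cast Nat.le_of_dvd (Nat.factorial_pos _) (Nat.factorial_mul_factorial_dvd_factorial_add j m)
  have h3 : (Nat.factorial j : ℝ) ^ (α - 1) * (Nat.factorial m : ℝ) ^ (α - 1)
      ≤ (Nat.factorial (j + m) : ℝ) ^ (α - 1) := by
    rw [← Real.mul_rpow hjf.le hmf.le]
    exact Real.rpow_le_rpow (by positivity) h2 (by linarith)
  have h4 : ∀ t : ℝ, 0 < t → t ^ α = t * t ^ (α - 1) := by
    intro t ht
    rw [Real.rpow_sub_one ht.ne']; field_simp
  rw [h4 _ hmf, h4 _ hsf]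
  have h5 : 0 < (Nat.factorial j : ℝ) ^ (α - 1) := by positivity
  have e1 : ((j + m).choose j : ℝ) * (C * (Nat.factorial j : ℝ) * R ^ j) *
      (M1 * ((Nat.factorial m : ℝ) * (Nat.factorial m : ℝ) ^ (α - 1)) / η ^ m)
      = C * M1 * (Nat.factorial (j + m) : ℝ) * R ^ j / η ^ m * (Nat.factorial m : ℝ) ^ (α - 1) := by
    rw [← h1]; ring
  have e2 : C * M1 * ((Nat.factorial (j + m) : ℝ) * (Nat.factorial (j + m) : ℝ) ^ (α - 1)
      / η ^ (j + m)) * ((η * R) ^ j / (Nat.factorial j : ℝ) ^ (α - 1))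
      = C * M1 * (Nat.factorial (j + m) : ℝ) * R ^ j / η ^ m *
        ((Nat.factorial (j + m) : ℝ) ^ (α - 1) / (Nat.factorial j : ℝ) ^ (α - 1)) := by
    rw [pow_add, mul_pow]; field_simp
  rw [e1, e2]
  gcongr
  rw [le_div_iff₀ h5, mul_comm]; exact h3

lemma prod_bound (α : ℝ) (hα : 1 < α) (F : ℝ → ℂ) (ρ : ℝ → ℝ) (M η : ℝ)
    (C R : ℝ) (hC : 0 < C) (hR : 0 < R)
    (hF : ∀ y ∈ Set.Icc (-π) π, ∀ j : ℕ,
      ‖iteratedDeriv j F y‖ ≤ C * (Nat.factorial j : ℝ) * R ^ j)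
    (hana : AnalyticOnNhd ℝ F (Set.Icc (-π) π))
    (hρsm : ContDiff ℝ (⊤ : ℕ∞) ρ)
    (hsupp : ∀ y, y ∉ Set.Ioo (-π) π → ρ y = 0) (hM : 0 < M) (hη : 0 < η)
    (hgev : ∀ s : ℕ, 1 ≤ s → ∀ y : ℝ,
      |iteratedDeriv s ρ y| ≤ M * (Nat.factorial s : ℝ) ^ α / η ^ s) :
    ∃ M' : ℝ, 0 < M' ∧ ∀ s : ℕ, ∀ y : ℝ,
      ‖iteratedDeriv s (fun z => F z * ((ρ z : ℝ) : ℂ)) y‖ ≤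
          M' * (Nat.factorial s : ℝ) ^ α / η ^ s := by
  obtain ⟨M0, hM0⟩ := (isCompact_Icc (a := -π) (b := π)).exists_bound_of_continuousOn
    hρsm.continuous.continuousOn
  set M1 := max M M0 with hM1
  have hM1p : 0 < M1 := lt_max_of_lt_left hM
  have hρb : ∀ y ∈ Set.Icc (-π) π, ∀ k : ℕ,
      |iteratedDeriv k ρ y| ≤ M1 * (Nat.factorial k : ℝ) ^ α / η ^ k := by
    intro y hy k
    rcases Nat.eq_zero_or_pos k with rfl | hk
    · have h0 : |ρ y| ≤ M1 := (hM0 y hy).trans (le_max_right M M0)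
      simpa using h0
    · refine (hgev k hk y).trans ?_
      gcongr
      exact le_max_left _ _
  have hsum := summable_weights (α - 1) (η * R) (by linarith) (by positivity)
  set T := ∑' j : ℕ, (η * R) ^ j / (Nat.factorial j : ℝ) ^ (α - 1) with hT
  have hnn : ∀ j : ℕ, 0 ≤ (η * R) ^ j / (Nat.factorial j : ℝ) ^ (α - 1) := fun j => by positivity
  have hT0 : 0 ≤ T := tsum_nonneg hnn
  refine ⟨C * M1 * (T + 1), by positivity, ?_⟩
  intro s y
  by_cases hy : y ∈ Set.Icc (-π) π
  swap
  · rw [prod_zero F ρ hsupp s y hy, norm_zero]; positivity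
  have hFc : ContDiffAt ℝ s F y := (hana y hy).contDiffAt
  have hρc : ContDiffAt ℝ s (fun z => ((ρ z : ℝ) : ℂ)) y :=
    (Complex.ofRealCLM.contDiff.comp (hρsm.of_le (by exact_mod_cast le_top))).contDiffAt
  rw [iteratedDeriv_fun_mul hFc hρc]
  calc _ ≤ ∑ j ∈ Finset.range (s + 1), ‖(s.choose j : ℂ) * iteratedDeriv j F y *
        iteratedDeriv (s - j) (fun z => ((ρ z : ℝ) : ℂ)) y‖ := norm_sum_le _ _
    _ ≤ ∑ j ∈ Finset.range (s + 1), C * M1 * ((Nat.factorial s : ℝ) ^ α / η ^ s) *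
      ((η * R) ^ j / (Nat.factorial j : ℝ) ^ (α - 1)) := by
        apply Finset.sum_le_sum
        intro j hj
        have hj' : j ≤ s := by simpa [Nat.lt_succ_iff] using hj
        refine le_trans ?_ (term_bound α η C R M1 hα hη hC hR hM1p s j hj')
        rw [norm_mul, norm_mul, norm_iteratedDeriv_ofReal ρ hρsm]
        have : ‖(s.choose j : ℂ)‖ = (s.choose j : ℝ) := by simp
        rw [this]
        gcongr
        · exact hF y hy j
        · exact hρb y hy _
    _ = C * M1 * ((Nat.factorial s : ℝ) ^ α / η ^ s) *
        ∑ j ∈ Finset.range (s + 1), ((η * R) ^ j / (Nat.factorial j : ℝ) ^ (α - 1)) := by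
        rw [Finset.mul_sum]
    _ ≤ C * M1 * ((Nat.factorial s : ℝ) ^ α / η ^ s) * (T + 1) := by
        gcongr
        have := hsum.sum_le_tsum (Finset.range (s + 1)) (fun j _ => hnn j)
        linarith
    _ = _ := by ring

lemma coeff_step {a b : ℝ} (hab : a < b) (h h' : ℝ → ℂ) (hd : ∀ x, HasDerivAt h (h' x) x)
    (hc : Continuous h') (ha : h a = 0) (hb : h b = 0) (hba : b - a = 2 * π) (k : ℤ) (hk : k ≠ 0) :
    ‖fourierCoeffOn hab h k‖ = ‖fourierCoeffOn hab h' k‖ / |(k : ℝ)| := by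
  rw [fourierCoeffOn_of_hasDerivAt hab hk (fun x _ => hd x) (hc.intervalIntegrable _ _), ha, hb]
  have e : ((b : ℂ) - a) = 2 * π := by
    rw [← Complex.ofReal_sub, hba]; push_cast; ring
  rw [e]
  have hk' : |(k : ℝ)| ≠ 0 := by simpa using hk
  have hpi := Real.pi_pos.ne'
  simp [abs_of_pos Real.pi_pos]
  field_simp

lemma coeff_iter {a b : ℝ} (hab : a < b) (h : ℝ → ℂ) (hs : ContDiff ℝ (⊤ : ℕ∞) h)
    (ha : ∀ s, iteratedDeriv s h a = 0) (hb : ∀ s, iteratedDeriv s h b = 0)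
    (hba : b - a = 2 * π) (k : ℤ) (hk : k ≠ 0) (s : ℕ) :
    ‖fourierCoeffOn hab h k‖ = ‖fourierCoeffOn hab (iteratedDeriv s h) k‖ / |(k : ℝ)| ^ s := by
  induction s with
  | zero => simp
  | succ s ih =>
    rw [ih, coeff_step hab (iteratedDeriv s h) (iteratedDeriv (s + 1) h) ?_ ?_ (ha s) (hb s) hba k hk]
    · rw [div_div, pow_succ']
    · intro x
      rw [iteratedDeriv_succ]
      exact (hs.differentiable_iteratedDeriv s (by exact_mod_cast WithTop.coe_lt_top s)).differentiableAt.hasDerivAt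
    · exact hs.continuous_iteratedDeriv _ (by exact_mod_cast le_top)

lemma coeff_sq {a b : ℝ} (hab : a < b) (h : ℝ → ℂ) (hc : Continuous h) (B : ℝ)
    (hB : ∀ y, ‖h y‖ ≤ B) :
    Summable (fun k : ℤ => ‖fourierCoeffOn hab h k‖ ^ 2) ∧
      ∀ u : Finset ℤ, ∑ k ∈ u, ‖fourierCoeffOn hab h k‖ ^ 2 ≤ B ^ 2 := by
  have hL2 : MemLp h 2 (volume.restrict (Set.Ioc a b)) :=
    MemLp.of_bound hc.aestronglyMeasurable B (Filter.Eventually.of_forall hB)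
  have hS := hasSum_sq_fourierCoeffOn hab hL2
  refine ⟨hS.summable, fun u => ?_⟩
  refine (sum_le_hasSum u (fun _ _ => by positivity) hS).trans ?_
  rw [smul_eq_mul, inv_mul_le_iff₀ (by linarith)]
  have : ∫ x in a..b, ‖h x‖ ^ 2 ≤ ∫ x in a..b, B ^ 2 := by
    apply intervalIntegral.integral_mono_on hab.le
    · exact (hc.norm.pow 2).intervalIntegrable _ _
    · simp
    · intro x _
      exact pow_le_pow_left₀ (norm_nonneg _) (hB x) 2
  simpa using this

lemma sum_inv_sq (p : ℕ) (hp : 1 ≤ p) (u : Finset ℤ) (hu : ∀ k ∈ u, (p : ℤ) < |k|) :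
    ∑ k ∈ u, ((k : ℝ) ^ 2)⁻¹ ≤ 2 / p := by
  classical
  set N : ℕ := p + u.sup Int.natAbs with hN
  have hpN : p ≤ N := by omega
  have hsub : u ⊆ (Finset.Ioc p N).image (fun n : ℕ => (n : ℤ)) ∪
      (Finset.Ioc p N).image (fun n : ℕ => -(n : ℤ)) := by
    intro k hk
    have h1 := hu k hk
    rw [lt_abs] at h1
    have h2 : k.natAbs ≤ u.sup Int.natAbs := Finset.le_sup (f := Int.natAbs) hk
    simp only [Finset.mem_union, Finset.mem_image, Finset.mem_Ioc]
    rcases le_total 0 k with h | h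
    · left; exact ⟨k.natAbs, by omega, by omega⟩
    · right; exact ⟨k.natAbs, by omega, by omega⟩
  have hb := sum_Ioc_inv_sq_le_sub (α := ℝ) (k := p) (n := N) (by omega) hpN
  have hN0 : (0 : ℝ) ≤ (N : ℝ)⁻¹ := by positivity
  have hnn : ∀ k : ℤ, 0 ≤ ((k : ℝ) ^ 2)⁻¹ := fun k => by positivity
  have hui := Finset.sum_union_inter (s₁ := (Finset.Ioc p N).image (fun n : ℕ => (n : ℤ)))
    (s₂ := (Finset.Ioc p N).image (fun n : ℕ => -(n : ℤ))) (f := fun k : ℤ => ((k : ℝ) ^ 2)⁻¹)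
  have hi : 0 ≤ ∑ k ∈ (Finset.Ioc p N).image (fun n : ℕ => (n : ℤ)) ∩
      (Finset.Ioc p N).image (fun n : ℕ => -(n : ℤ)), ((k : ℝ) ^ 2)⁻¹ :=
    Finset.sum_nonneg (fun k _ => hnn k)
  have e1 : ∑ k ∈ (Finset.Ioc p N).image (fun n : ℕ => (n : ℤ)), ((k : ℝ) ^ 2)⁻¹
      = ∑ n ∈ Finset.Ioc p N, ((n : ℝ) ^ 2)⁻¹ := by
    rw [Finset.sum_image (by intro x _ y _ hxy; simpa using hxy)]
    simp
  have e2 : ∑ k ∈ (Finset.Ioc p N).image (fun n : ℕ => -(n : ℤ)), ((k : ℝ) ^ 2)⁻¹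
      = ∑ n ∈ Finset.Ioc p N, ((n : ℝ) ^ 2)⁻¹ := by
    rw [Finset.sum_image (by intro x _ y _ hxy; simpa using hxy)]
    simp
  have h3 := Finset.sum_le_sum_of_subset_of_nonneg hsub (f := fun k : ℤ => ((k : ℝ) ^ 2)⁻¹)
    (fun k _ _ => hnn k)
  rw [e1, e2] at hui
  have : (2 : ℝ) / p = 2 * (p : ℝ)⁻¹ := by ring
  rw [this]
  linarith

lemma tail_bound {a b : ℝ} (hab : a < b) (h : ℝ → ℂ) (hs : ContDiff ℝ (⊤ : ℕ∞) h)
    (ha : ∀ s, iteratedDeriv s h a = 0) (hb : ∀ s, iteratedDeriv s h b = 0)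
    (hba : b - a = 2 * π) (s : ℕ) (hs1 : 1 ≤ s) (B : ℝ) (hB : ∀ y, ‖iteratedDeriv s h y‖ ≤ B)
    (p : ℕ) (hp : 1 ≤ p) (u : Finset ℤ) (hu : ∀ k ∈ u, (p : ℤ) < |k|) :
    ‖∑ k ∈ u, fourierCoeffOn hab h k‖ ≤ 2 * B * (√p / p ^ s) := by
  have hB0 : 0 ≤ B := (norm_nonneg _).trans (hB 0)
  have hp1 : (1 : ℝ) ≤ p := by exact_mod_cast hp
  have hp0 : (0 : ℝ) < p := by linarith
  have hcont : Continuous (iteratedDeriv s h) :=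
    hs.continuous_iteratedDeriv _ (by exact_mod_cast le_top)
  have h1 := (coeff_sq hab (iteratedDeriv s h) hcont B hB).2 u
  have h2 := sum_inv_sq p hp u hu
  have hk : ∀ k ∈ u, (p : ℝ) ≤ |(k : ℝ)| := by
    intro k hk
    have := (hu k hk).le
    exact_mod_cast this
  have h3 : ∑ k ∈ u, ((|(k : ℝ)| ^ s)⁻¹) ^ 2 ≤ ((p : ℝ) ^ (s - 1))⁻¹ ^ 2 * (2 / p) := by
    calc _ ≤ ∑ k ∈ u, ((p : ℝ) ^ (s - 1))⁻¹ ^ 2 * ((k : ℝ) ^ 2)⁻¹ := by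
          apply Finset.sum_le_sum
          intro k hku
          have hkp := hk k hku
          have hkpos : 0 < |(k : ℝ)| := by linarith
          have : |(k : ℝ)| ^ s = |(k : ℝ)| ^ (s - 1) * |(k : ℝ)| := by
            rw [← pow_succ]; congr 1; omega
          rw [this, mul_inv, mul_pow, inv_pow (|(k : ℝ)|), sq_abs]
          gcongr
      _ = ((p : ℝ) ^ (s - 1))⁻¹ ^ 2 * ∑ k ∈ u, ((k : ℝ) ^ 2)⁻¹ := by rw [Finset.mul_sum]
      _ ≤ _ := by gcongr
  calc ‖∑ k ∈ u, fourierCoeffOn hab h k‖ ≤ ∑ k ∈ u, ‖fourierCoeffOn hab h k‖ := norm_sum_le _ _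
    _ = ∑ k ∈ u, ‖fourierCoeffOn hab (iteratedDeriv s h) k‖ * (|(k : ℝ)| ^ s)⁻¹ := by
        apply Finset.sum_congr rfl
        intro k hku
        have hk0 : k ≠ 0 := by
          rintro rfl
          have := hu 0 hku
          simp at this
          omega
        rw [coeff_iter hab h hs ha hb hba k hk0 s, div_eq_mul_inv]
    _ ≤ √(∑ k ∈ u, ‖fourierCoeffOn hab (iteratedDeriv s h) k‖ ^ 2) *
          √(∑ k ∈ u, ((|(k : ℝ)| ^ s)⁻¹) ^ 2) := Real.sum_mul_le_sqrt_mul_sqrt _ _ _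
    _ ≤ √(B ^ 2) * √(((p : ℝ) ^ (s - 1))⁻¹ ^ 2 * (2 / p)) := by gcongr
    _ = B * (((p : ℝ) ^ (s - 1))⁻¹ * √(2 / p)) := by
        rw [Real.sqrt_sq hB0, Real.sqrt_mul (by positivity), Real.sqrt_sq (by positivity)]
    _ ≤ B * (((p : ℝ) ^ (s - 1))⁻¹ * (2 * (√p / p))) := by
        gcongr
        rw [Real.sqrt_le_left (by positivity), mul_pow, div_pow, Real.sq_sqrt hp0.le]
        have : (2:ℝ) ^ 2 * (p / p ^ 2) = 4 / p := by field_simp; norm_num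
        rw [this]
        gcongr
        norm_num
    _ = _ := by
        have : (p : ℝ) ^ s = (p : ℝ) ^ (s - 1) * p := by
            rw [← pow_succ]; congr 1; omega
        rw [this]
        field_simp

lemma coeff_summable {a b : ℝ} (hab : a < b) (h : ℝ → ℂ) (hs : ContDiff ℝ (⊤ : ℕ∞) h)
    (ha : ∀ s, iteratedDeriv s h a = 0) (hb : ∀ s, iteratedDeriv s h b = 0)
    (hba : b - a = 2 * π) (B : ℝ) (hB : ∀ y, ‖iteratedDeriv 1 h y‖ ≤ B) :
    Summable (fun k : ℤ => fourierCoeffOn hab h k) := by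
  have hcont : Continuous (iteratedDeriv 1 h) :=
    hs.continuous_iteratedDeriv _ (by exact_mod_cast le_top)
  have h1 := (coeff_sq hab (iteratedDeriv 1 h) hcont B hB).1
  have h2 : Summable (fun k : ℤ => 1 / (k : ℝ) ^ 2) := Real.summable_one_div_int_pow.2 (by norm_num)
  apply Summable.of_norm_bounded_eventually (h1.add h2)
  filter_upwards [(Set.finite_singleton (0 : ℤ)).compl_mem_cofinite] with k hk
  have hk0 : k ≠ 0 := by simpa using hk
  rw [coeff_iter hab h hs ha hb hba k hk0 1, pow_one]
  have e : 1 / (k : ℝ) ^ 2 = (1 / |(k : ℝ)|) ^ 2 := by rw [div_pow, sq_abs, one_pow]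
  rw [e, div_eq_mul_one_div]
  nlinarith [sq_nonneg (‖fourierCoeffOn hab (iteratedDeriv 1 h) k‖ - 1 / |(k : ℝ)|),
    sq_nonneg (‖fourierCoeffOn hab (iteratedDeriv 1 h) k‖), sq_nonneg (1 / |(k : ℝ)|)]

lemma coeff_hasSum (hab : -π < -π + 2 * π) (h : ℝ → ℂ) (hc : Continuous h)
    (he : h (-π) = h (-π + 2 * π))
    (hsum : Summable (fun k : ℤ => fourierCoeffOn hab h k)) :
    HasSum (fun k : ℤ => fourierCoeffOn hab h k) (h 0) := by
  have : Fact (0 < 2 * π) := ⟨by positivity⟩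
  let g : C(AddCircle (2 * π), ℂ) :=
    ⟨AddCircle.liftIco (2 * π) (-π) h, AddCircle.liftIco_continuous he hc.continuousOn⟩
  have hg : ∀ k, fourierCoeff g k = fourierCoeffOn hab h k := fun k =>
    fourierCoeff_liftIco_eq h k
  have hsum' : Summable (fourierCoeff g) := by
    have : fourierCoeff g = fun k : ℤ => fourierCoeffOn hab h k := funext hg
    rw [this]; exact hsum
  have := has_pointwise_sum_fourier_series_of_summable hsum' (0 : AddCircle (2 * π))
  have e0 : g 0 = h 0 := by
    have := AddCircle.liftIco_coe_apply (p := 2 * π) (a := -π) (f := h) (x := 0)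
      ⟨by linarith [Real.pi_pos], by linarith [Real.pi_pos]⟩
    rw [QuotientAddGroup.mk_zero] at this
    exact this
  rw [e0] at this
  simpa [hg] using this

lemma exp_sum_cos (p : ℕ) (y : ℝ) :
    ∑ k ∈ Finset.Icc (-(p : ℤ)) (p : ℤ), Complex.exp (-(Complex.I * k * y)) =
      ((∑ k ∈ Finset.Icc (-(p : ℤ)) (p : ℤ), Real.cos (k * y) : ℝ) : ℂ) := by
  have h1 : ∑ k ∈ Finset.Icc (-(p : ℤ)) (p : ℤ), Complex.exp (-(Complex.I * k * y))
      = ∑ k ∈ Finset.Icc (-(p : ℤ)) (p : ℤ), Complex.exp (Complex.I * k * y) := by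
    apply Finset.sum_nbij' (fun k => -k) (fun k => -k)
    · intro k hk; simp only [Finset.mem_Icc] at *; omega
    · intro k hk; simp only [Finset.mem_Icc] at *; omega
    · simp
    · simp
    · intro k _; congr 1; push_cast; ring
  have h2 : ((∑ k ∈ Finset.Icc (-(p : ℤ)) (p : ℤ), Real.cos (k * y) : ℝ) : ℂ)
      = (∑ k ∈ Finset.Icc (-(p : ℤ)) (p : ℤ), Complex.exp (Complex.I * k * y) +
        ∑ k ∈ Finset.Icc (-(p : ℤ)) (p : ℤ), Complex.exp (-(Complex.I * k * y))) / 2 := by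
    rw [← Finset.sum_add_distrib, Finset.sum_div, Complex.ofReal_sum]
    apply Finset.sum_congr rfl
    intro k _
    rw [Complex.ofReal_cos, Complex.cos]
    push_cast
    have e1 : (k : ℂ) * y * Complex.I = Complex.I * k * y := by ring
    have e2 : -((k : ℂ) * y) * Complex.I = -(Complex.I * k * y) := by ring
    rw [e1, e2]
  rw [h2, ← h1]; ring

lemma integral_dirichlet (hab : -π < -π + 2 * π) (h : ℝ → ℂ) (hc : Continuous h) (p : ℕ) :
    ∫ y in (-π)..π, h y * ((dirichletKer p y : ℝ) : ℂ) =
      ∑ k ∈ Finset.Icc (-(p : ℤ)) (p : ℤ), fourierCoeffOn hab h k := by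
  have hcoef : ∀ k : ℤ, fourierCoeffOn hab h k =
      ∫ y in (-π)..π, (1 / (2 * π) : ℂ) * (h y * Complex.exp (-(Complex.I * k * y))) := by
    intro k
    rw [fourierCoeffOn_eq_integral, intervalIntegral.integral_const_mul]
    have e : -π + 2 * π = π := by ring
    have e2 : -π + 2 * π - -π = 2 * π := by ring
    have hpi : (π : ℂ) ≠ 0 := by exact_mod_cast Real.pi_pos.ne'
    simp only [fourier_coe_apply, e2]
    rw [e, Complex.real_smul]
    congr 1
    · push_cast; ring
    · apply intervalIntegral.integral_congr
      intro y _
      simp only [smul_eq_mul]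
      rw [mul_comm]
      congr 2
      push_cast
      field_simp
  simp_rw [hcoef]
  rw [← intervalIntegral.integral_finsetSum]
  · apply intervalIntegral.integral_congr
    intro y _
    simp only
    rw [← Finset.mul_sum, ← Finset.mul_sum, exp_sum_cos, dirichletKer]
    push_cast
    ring
  · intro k _
    apply Continuous.intervalIntegrable
    fun_prop

lemma fourier_error (h : ℝ → ℂ) (hs : ContDiff ℝ (⊤ : ℕ∞) h)
    (hz : ∀ s y, y ∉ Set.Icc (-π) π → iteratedDeriv s h y = 0)
    (B : ℕ → ℝ) (hB : ∀ s y, ‖iteratedDeriv s h y‖ ≤ B s)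
    (p : ℕ) (hp : 1 ≤ p) (s : ℕ) (hs1 : 1 ≤ s) :
    ‖(∫ y in (-π)..π, h y * ((dirichletKer p y : ℝ) : ℂ)) - h 0‖ ≤ 2 * B s * (√p / p ^ s) := by
  classical
  have hpi := Real.pi_pos
  have hab : -π < -π + 2 * π := by linarith
  have hcont : ∀ s, Continuous (iteratedDeriv s h) := fun s =>
    hs.continuous_iteratedDeriv _ (by exact_mod_cast le_top)
  have hl : ∀ s, iteratedDeriv s h (-π) = 0 := by
    intro s
    have h1 : Filter.Tendsto (iteratedDeriv s h) (nhdsWithin (-π) (Set.Iio (-π)))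
        (nhds (iteratedDeriv s h (-π))) := (hcont s).continuousAt.mono_left nhdsWithin_le_nhds
    refine tendsto_nhds_unique h1 (tendsto_const_nhds.congr' ?_)
    filter_upwards [self_mem_nhdsWithin] with y hy
    exact (hz s y (fun h => not_lt.2 h.1 hy)).symm
  have hr : ∀ s, iteratedDeriv s h (-π + 2 * π) = 0 := by
    have e : -π + 2 * π = π := by ring
    rw [e]
    intro s
    have h1 : Filter.Tendsto (iteratedDeriv s h) (nhdsWithin π (Set.Ioi π))
        (nhds (iteratedDeriv s h π)) := (hcont s).continuousAt.mono_left nhdsWithin_le_nhds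
    refine tendsto_nhds_unique h1 (tendsto_const_nhds.congr' ?_)
    filter_upwards [self_mem_nhdsWithin] with y hy
    exact (hz s y (fun h => not_lt.2 h.2 hy)).symm
  have hba : -π + 2 * π - -π = 2 * π := by ring
  have hsum := coeff_summable hab h hs hl hr hba (B 1) (hB 1)
  have hS := coeff_hasSum hab h hs.continuous
    (by have h1 := hl 0; have h2 := hr 0; rw [iteratedDeriv_zero] at h1 h2; rw [h1, h2]) hsum
  rw [integral_dirichlet hab h hs.continuous p, norm_sub_rev]
  have hlim := (Filter.Tendsto.sub_const hS
    (∑ k ∈ Finset.Icc (-(p : ℤ)) (p : ℤ), fourierCoeffOn hab h k)).norm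
  refine le_of_tendsto hlim ?_
  filter_upwards [Filter.eventually_ge_atTop (Finset.Icc (-(p : ℤ)) (p : ℤ))] with t ht
  rw [← Finset.sum_sdiff_eq_sub ht]
  apply tail_bound hab h hs hl hr hba s hs1 (B s) (hB s) p hp
  intro k hk
  simp only [Finset.mem_sdiff, Finset.mem_Icc, not_and_or, not_le] at hk
  rw [lt_abs]; omega


lemma factorial_stirling (n : ℕ) (hn : 1 ≤ n) :
    (Nat.factorial n : ℝ) ≤ Real.exp 1 * √n * (n / Real.exp 1) ^ n := by
  obtain ⟨m, rfl⟩ := Nat.exists_eq_add_of_le' hn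
  have h : Stirling.stirlingSeq (m + 1) ≤ Stirling.stirlingSeq 1 :=
    Stirling.stirlingSeq'_antitone (Nat.zero_le m)
  rw [Stirling.stirlingSeq_one, Stirling.stirlingSeq, div_le_iff₀ (by positivity),
    Real.sqrt_mul (by norm_num)] at h
  refine h.trans_eq ?_
  have : (√2 : ℝ) ≠ 0 := by positivity
  field_simp

/-- Optimisation over the number of derivatives. -/
lemma optimise (α η : ℝ) (hα : 1 ≤ α) (hη : 0 < η) :
    ∃ K : ℝ, 0 < K ∧ ∀ p : ℕ, 1 ≤ p → ∃ s : ℕ, 1 ≤ s ∧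
      (Nat.factorial s : ℝ) ^ α / η ^ s * √p / p ^ s ≤
        K * p * Real.exp (-α * (η * p) ^ (1 / α)) := by
  have hα0 : 0 < α := by linarith
  refine ⟨max (Real.exp α / η) (Real.exp (2 * α) * √η), lt_max_of_lt_left (by positivity), ?_⟩
  intro p hp
  have hp1 : (1 : ℝ) ≤ p := by exact_mod_cast hp
  have hp0 : (0 : ℝ) < p := by linarith
  set u : ℝ := (η * p) ^ (1 / α) with hu
  have hu0 : 0 < u := by positivity
  have hua : u ^ α = η * p := by
    rw [hu, ← Real.rpow_mul (by positivity), one_div_mul_cancel hα0.ne', Real.rpow_one]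
  by_cases hu1 : u < 1
  · refine ⟨1, le_rfl, ?_⟩
    have h1 : Real.exp (-α) ≤ Real.exp (-α * u) := by
      apply Real.exp_le_exp.2; nlinarith
    have h2 : √(p : ℝ) ≤ p * p := by
      rw [Real.sqrt_le_left (by positivity)]
      have : (1:ℝ) ≤ p ^ 3 := one_le_pow₀ hp1
      nlinarith
    calc (Nat.factorial 1 : ℝ) ^ α / η ^ 1 * √p / p ^ 1 = 1 / η * (√p / p) := by simp; ring
      _ ≤ 1 / η * p := by
        gcongr
        rw [div_le_iff₀ hp0]; exact h2
      _ = Real.exp α / η * p * Real.exp (-α) := by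
        rw [Real.exp_neg]; field_simp
      _ ≤ _ := by
        gcongr
        exact le_max_left _ _
  · push Not at hu1
    set s := ⌊u⌋₊ with hs
    have hs1 : 1 ≤ s := by rw [hs]; exact Nat.le_floor (by simpa using hu1)
    have hsu : (s : ℝ) ≤ u := Nat.floor_le hu0.le
    have hus : u < s + 1 := Nat.lt_floor_add_one u
    refine ⟨s, hs1, ?_⟩
    have hfac : (Nat.factorial s : ℝ) / u ^ s ≤ Real.exp 2 * √u * Real.exp (-u) := by
      rw [div_le_iff₀ (by positivity)]
      refine (factorial_stirling s hs1).trans ?_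
      have h1 : ((s : ℝ) / Real.exp 1) ^ s ≤ Real.exp (1 - u) * u ^ s := by
        rw [div_pow, ← Real.exp_nat_mul, mul_one, div_eq_mul_inv, ← Real.exp_neg, mul_comm]
        gcongr
        linarith
      calc Real.exp 1 * √s * (s / Real.exp 1) ^ s
          ≤ Real.exp 1 * √u * (Real.exp (1 - u) * u ^ s) := by gcongr
        _ = _ := by
          have : Real.exp 1 * Real.exp (1 - u) = Real.exp 2 * Real.exp (-u) := by
            rw [← Real.exp_add, ← Real.exp_add]; ring_nf
          linear_combination √u * u ^ s * this
    have hpow : (η * p) ^ s = (u ^ s) ^ α := by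
      rw [← hua, ← Real.rpow_natCast, ← Real.rpow_natCast, ← Real.rpow_mul hu0.le,
        ← Real.rpow_mul hu0.le, mul_comm]
    have hsq : (√u) ^ α = √η * √p := by
      rw [Real.sqrt_eq_rpow, ← Real.rpow_mul hu0.le, mul_comm, Real.rpow_mul hu0.le, hua,
        ← Real.sqrt_eq_rpow, Real.sqrt_mul hη.le]
    calc (Nat.factorial s : ℝ) ^ α / η ^ s * √p / p ^ s
        = ((Nat.factorial s : ℝ) ^ α / (η * p) ^ s) * √p := by
          rw [mul_pow]; field_simp
      _ = ((Nat.factorial s : ℝ) / u ^ s) ^ α * √p := by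
          rw [hpow, Real.div_rpow (by positivity) (by positivity)]
      _ ≤ (Real.exp 2 * √u * Real.exp (-u)) ^ α * √p := by
          gcongr
      _ = Real.exp (2 * α) * (√η * √p) * Real.exp (-α * u) * √p := by
          rw [Real.mul_rpow (by positivity) (by positivity), Real.mul_rpow (by positivity)
            (by positivity), hsq, ← Real.exp_mul, ← Real.exp_mul]
          ring_nf
      _ = Real.exp (2 * α) * √η * (√p * √p) * Real.exp (-α * u) := by ring
      _ = Real.exp (2 * α) * √η * p * Real.exp (-α * u) := by
          rw [Real.mul_self_sqrt hp0.le]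
      _ ≤ _ := by
          gcongr
          exact le_max_right _ _

/-- If `f(x-θ·)` is analytic on `[-π,π]` and `ρ ∈ G_α ∩ C_0^∞(-π,π)`
with `ρ(0) = 1`, then `g_x(y) = f(x-θy)ρ(y) - f(x)` belongs to `G_α`, and the
regularization error satisfies
`|(f ⋆ ψ_{p,θ})(x) - f(x)| ≤ Const_ρ · p · e^{-α(ηp)^{1/α}}`. -/
theorem gevrey_regularization_error
    (α : ℝ) (hα : 1 ≤ α) (f : ℝ → ℂ) (x θ : ℝ) (ρ : ℝ → ℝ) (M η : ℝ)
    (hper : Function.Periodic f (2 * π)) (hθ : 0 < θ)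
    (hana : AnalyticOnNhd ℝ (fun y => f (x - θ * y)) (Set.Icc (-π) π))
    (hρsm : ContDiff ℝ (⊤ : ℕ∞) ρ)
    (hsupp : ∀ y, y ∉ Set.Ioo (-π) π → ρ y = 0)
    (hρ0 : ρ 0 = 1) (hM : 0 < M) (hη : 0 < η)
    (hgev : ∀ s : ℕ, 1 ≤ s → ∀ y : ℝ,
      |iteratedDeriv s ρ y| ≤ M * (Nat.factorial s : ℝ) ^ α / η ^ s) :
    (∃ M' η' : ℝ, 0 < M' ∧ 0 < η' ∧
      ∀ s : ℕ, 1 ≤ s → ∀ y : ℝ,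
        ‖iteratedDeriv s (fun z => f (x - θ * z) * ((ρ z : ℝ) : ℂ) - f x) y‖ ≤
          M' * (Nat.factorial s : ℝ) ^ α / η' ^ s) ∧
    ∃ Const : ℝ, 0 < Const ∧
      ∀ p : ℕ, 1 ≤ p →
        ‖(∫ y in (-π)..π, f (x - θ * y) * ((ρ y * dirichletKer p y : ℝ) : ℂ)) - f x‖ ≤
          Const * p * Real.exp (-α * (η * p) ^ (1 / α)) := by
  rcases eq_or_lt_of_le hα with rfl | hα1
  · exfalso
    have := gevrey_one_zero ρ M η hM hη hρsm (by simpa using hgev) (-π)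
      (fun y hy => hsupp y (fun h => not_lt.2 h.1.le hy)) 0
    rw [hρ0] at this
    exact one_ne_zero this
  obtain ⟨C, R, hC, hR, hF⟩ := analytic_bound _ _ isCompact_Icc hana
  obtain ⟨M', hM', hb⟩ := prod_bound α hα1 _ ρ M η C R hC hR hF hana hρsm hsupp hM hη hgev
  have hsm := prod_contDiff _ ρ hana hρsm hsupp
  refine ⟨⟨M', η, hM', hη, ?_⟩, ?_⟩
  · intro s hs y
    obtain ⟨n, rfl⟩ := Nat.exists_eq_add_of_le' hs
    have e : iteratedDeriv (n + 1) (fun z => f (x - θ * z) * ((ρ z : ℝ) : ℂ) - f x) y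
        = iteratedDeriv (n + 1) (fun z => f (x - θ * z) * ((ρ z : ℝ) : ℂ)) y := by
      rw [iteratedDeriv_succ', iteratedDeriv_succ']
      congr 1
      funext z
      exact deriv_sub_const _
    rw [e]
    exact hb (n + 1) y
  · obtain ⟨K, hK, hopt⟩ := optimise α η hα hη
    refine ⟨2 * M' * K, by positivity, ?_⟩
    intro p hp
    obtain ⟨s, hs1, hs⟩ := hopt p hp
    have herr := fourier_error (fun z => f (x - θ * z) * ((ρ z : ℝ) : ℂ)) hsm
      (fun s y hy => prod_zero (fun z => f (x - θ * z)) ρ hsupp s y hy)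
      (fun s => M' * (Nat.factorial s : ℝ) ^ α / η ^ s) hb p hp s hs1
    have e1 : (∫ y in (-π)..π, f (x - θ * y) * ((ρ y * dirichletKer p y : ℝ) : ℂ))
        = ∫ y in (-π)..π, f (x - θ * y) * ((ρ y : ℝ) : ℂ) * ((dirichletKer p y : ℝ) : ℂ) := by
      congr 1
      funext y
      push_cast
      ring
    simp only [mul_zero, sub_zero, hρ0, Complex.ofReal_one, mul_one] at herr
    rw [e1]
    refine herr.trans ?_
    calc 2 * (M' * (Nat.factorial s : ℝ) ^ α / η ^ s) * (√p / p ^ s)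
        = 2 * M' * ((Nat.factorial s : ℝ) ^ α / η ^ s * √p / p ^ s) := by ring
      _ ≤ 2 * M' * (K * p * Real.exp (-α * (η * p) ^ (1 / α))) := by gcongr
      _ = _ := by ring
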